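/- arXiv:1412.1252 — 3 statements merged into one kernel-verified Lean document; each statement's English description precedes it below -/
import Mathlib

section
/- The function H̃(u,v) = p·(μ₂·u²/2 + b·u³/3) + (a + μ₁·u)·cos v is a first integral of system (m1): if (u(τ), v(τ)) is any differentiable solution of system (m1) on an interval, then the function τ ↦ H̃(u(τ), v(τ)) is constant on that interval. -/
open Real

/-!
System (m1) is Hamiltonian, with Hamilton function `H̃`: its equations read `u' = -∂H̃/∂v`,
`v' = ∂H̃/∂u`. Hence the derivative of `H̃` along a solution is
`∂H̃/∂u · u' + ∂H̃/∂v · v' = v' u' - u' v' = 0`.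
-/

section

open ContinuousLinearMap (fst snd)

variable {s : Set ℝ}

theorem comp_eq_of_hasFDerivAt_of_apply_eq_zero {E F : Type*}
    [NormedAddCommGroup E] [NormedSpace ℝ E] [NormedAddCommGroup F] [NormedSpace ℝ F]
    (hs : s.OrdConnected) {H : E → F} {H' : ℝ → E →L[ℝ] F} {γ γ' : ℝ → E}
    (hH : ∀ t ∈ s, HasFDerivAt H (H' t) (γ t))
    (hγ : ∀ t ∈ s, HasDerivWithinAt γ (γ' t) s t)
    (hzero : ∀ t ∈ s, H' t (γ' t) = 0) {t₁ t₂ : ℝ} (ht₁ : t₁ ∈ s) (ht₂ : t₂ ∈ s) :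
    H (γ t₁) = H (γ t₂) := by
  have hderiv : ∀ t ∈ s, HasDerivWithinAt (H ∘ γ) 0 s t := fun t ht =>
    hzero t ht ▸ (hH t ht).comp_hasDerivWithinAt t (hγ t ht)
  have hdist : ‖H (γ t₁) - H (γ t₂)‖ ≤ 0 * ‖t₁ - t₂‖ :=
    hs.convex.norm_image_sub_le_of_norm_hasDerivWithin_le hderiv (fun _ _ => norm_zero.le) ht₂ ht₁
  rwa [zero_mul, norm_le_zero_iff, sub_eq_zero] at hdist

theorem hamiltonian_eq_of_hamilton_equations {E : Type*}
    [NormedAddCommGroup E] [InnerProductSpace ℝ E] (hs : s.OrdConnected)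
    {H : E × E → ℝ} {u v Hu Hv : ℝ → E}
    (hH : ∀ t ∈ s, HasFDerivAt H ((innerSL ℝ (Hu t)).coprod (innerSL ℝ (Hv t))) (u t, v t))
    (hu : ∀ t ∈ s, HasDerivWithinAt u (-Hv t) s t)
    (hv : ∀ t ∈ s, HasDerivWithinAt v (Hu t) s t)
    {t₁ t₂ : ℝ} (ht₁ : t₁ ∈ s) (ht₂ : t₂ ∈ s) :
    H (u t₁, v t₁) = H (u t₂, v t₂) := by
  refine comp_eq_of_hasFDerivAt_of_apply_eq_zero hs hH
    (fun t ht => (hu t ht).prodMk (hv t ht)) (fun t _ => ?_) ht₁ ht₂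
  calc (innerSL ℝ (Hu t)).coprod (innerSL ℝ (Hv t)) (-Hv t, Hu t)
      = -inner ℝ (Hu t) (Hv t) + inner ℝ (Hv t) (Hu t) := by
        rw [ContinuousLinearMap.coprod_apply, innerSL_apply_apply, innerSL_apply_apply,
          inner_neg_right]
    _ = 0 := by rw [real_inner_comm, neg_add_cancel]

/-- The Hamilton function `H̃` of system (m1), evaluated at the phase point `x = (u, v)`. -/
noncomputable def hamiltonianM1 (a b μ₁ μ₂ p : ℝ) (x : ℝ × ℝ) : ℝ :=
  p * (μ₂ * x.1 ^ 2 / 2 + b * x.1 ^ 3 / 3) + (a + μ₁ * x.1) * cos x.2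

theorem hasFDerivAt_hamiltonianM1 (a b μ₁ μ₂ p : ℝ) (x : ℝ × ℝ) :
    HasFDerivAt (hamiltonianM1 a b μ₁ μ₂ p)
      ((innerSL ℝ (p * (b * x.1 ^ 2 + μ₂ * x.1) + μ₁ * cos x.2)).coprod
        (innerSL ℝ (-((a + μ₁ * x.1) * sin x.2)))) x := by
  have hu : HasFDerivAt (fun y : ℝ × ℝ => y.1) (fst ℝ ℝ ℝ) x := hasFDerivAt_fst
  have hv : HasFDerivAt (fun y : ℝ × ℝ => y.2) (snd ℝ ℝ ℝ) x := hasFDerivAt_snd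
  have hpoly (r : ℝ) : HasDerivAt (fun r => p * (μ₂ * r ^ 2 / 2 + b * r ^ 3 / 3))
      (p * (b * r ^ 2 + μ₂ * r)) r := by
    refine (((((hasDerivAt_pow 2 r).const_mul μ₂).div_const 2).add
      (((hasDerivAt_pow 3 r).const_mul b).div_const 3)).const_mul p).congr_deriv ?_
    push_cast
    ring
  refine (((hpoly x.1).comp_hasFDerivAt x hu).add
    (((hu.const_mul μ₁).const_add a).mul hv.cos)).congr_fderiv ?_
  ext <;> simp [mul_comm]

theorem stmt_1_general (a b μ₁ μ₂ p : ℝ) (hs : s.OrdConnected) {u v : ℝ → ℝ}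
    (hu : ∀ τ ∈ s, HasDerivWithinAt u ((a + μ₁ * u τ) * sin (v τ)) s τ)
    (hv : ∀ τ ∈ s, HasDerivWithinAt v
      (p * (b * u τ ^ 2 + μ₂ * u τ) + μ₁ * cos (v τ)) s τ) :
    ∀ τ₁ ∈ s, ∀ τ₂ ∈ s,
      p * (μ₂ * u τ₁ ^ 2 / 2 + b * u τ₁ ^ 3 / 3) + (a + μ₁ * u τ₁) * cos (v τ₁)
      = p * (μ₂ * u τ₂ ^ 2 / 2 + b * u τ₂ ^ 3 / 3) + (a + μ₁ * u τ₂) * cos (v τ₂) :=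
  fun _ h₁ _ h₂ => hamiltonian_eq_of_hamilton_equations hs
    (fun τ _ => hasFDerivAt_hamiltonianM1 a b μ₁ μ₂ p (u τ, v τ))
    (fun τ hτ => by simpa only [neg_neg] using hu τ hτ) hv h₁ h₂

end

/-- `H̃(u,v) = p·(μ₂·u²/2 + b·u³/3) + (a + μ₁·u)·cos v` is a first
integral of system (m1): along any differentiable solution `(u(τ), v(τ))` on an
interval (an order-connected set), `H̃(u(τ), v(τ))` is constant. -/
theorem stmt_1 (a b μ₁ μ₂ : ℝ) (p : ℕ) (hp : 0 < p)
    (s : Set ℝ) (hs : s.OrdConnected) (u v : ℝ → ℝ)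
    (hu : ∀ τ ∈ s, HasDerivAt u ((a + μ₁ * u τ) * Real.sin (v τ)) τ)
    (hv : ∀ τ ∈ s, HasDerivAt v
      ((p : ℝ) * (b * u τ ^ 2 + μ₂ * u τ) + μ₁ * Real.cos (v τ)) τ) :
    ∀ τ₁ ∈ s, ∀ τ₂ ∈ s,
      (p : ℝ) * (μ₂ * u τ₁ ^ 2 / 2 + b * u τ₁ ^ 3 / 3) +
        (a + μ₁ * u τ₁) * Real.cos (v τ₁)
      = (p : ℝ) * (μ₂ * u τ₂ ^ 2 / 2 + b * u τ₂ ^ 3 / 3) +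
        (a + μ₁ * u τ₂) * Real.cos (v τ₂) :=
  stmt_1_general a b μ₁ μ₂ p hs (fun τ hτ => (hu τ hτ).hasDerivWithinAt)
    (fun τ hτ => (hv τ hτ).hasDerivWithinAt)
end

section
/- For system (m1) with a = 2 and b = 1, if the parameters lie on the bifurcation parabola p·μ₂² − 4μ₁ = 0, then (−μ₂/2, 0) is an equilibrium of the system and the Jacobian matrix of the vector field at this equilibrium has both trace and determinant equal to zero, so both eigenvalues of the linearization are zero (the equilibrium O₁± has become a degenerate double equilibrium). -/
open Real Polynomial

/-- An equilibrium of system (m1): both right-hand sides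
`(a + μ₁u)·sin v` and `p·(b·u² + μ₂·u) + μ₁·cos v` vanish. -/
def IsM1Equil (a b μ₁ μ₂ : ℝ) (p : ℕ) (q : ℝ × ℝ) : Prop :=
  (a + μ₁ * q.1) * Real.sin q.2 = 0 ∧
  (p : ℝ) * (b * q.1 ^ 2 + μ₂ * q.1) + μ₁ * Real.cos q.2 = 0

/-- The Jacobian matrix of the vector field of system (m1) at the point `(u, v)`:
the 2×2 matrix of partial derivatives of the right-hand sides with respect to
`u` and `v`. -/
noncomputable def m1Jacobian (a b μ₁ μ₂ : ℝ) (p : ℕ) (u v : ℝ) :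
    Matrix (Fin 2) (Fin 2) ℝ :=
  !![deriv (fun u' : ℝ => (a + μ₁ * u') * Real.sin v) u,
     deriv (fun v' : ℝ => (a + μ₁ * u) * Real.sin v') v;
     deriv (fun u' : ℝ => (p : ℝ) * (b * u' ^ 2 + μ₂ * u') + μ₁ * Real.cos v) u,
     deriv (fun v' : ℝ => (p : ℝ) * (b * u ^ 2 + μ₂ * u) + μ₁ * Real.cos v') v]

/-!
On the axis `v = 0` the equilibria of (m1) are the roots of the quadratic
`p(bu² + μ₂u) + μ₁`. The vector field is divergence free, so the Jacobian always has zero trace,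
while on the axis its determinant is a multiple of the derivative `p(2bu + μ₂)` of that quadratic.
On the bifurcation parabola the quadratic has the double root `-μ₂ / (2b)`, so both the quadratic
and its derivative vanish there.
-/

theorem charpoly_eq_X_sq_of_trace_eq_zero_of_det_eq_zero {R : Type*} [CommRing R]
    {M : Matrix (Fin 2) (Fin 2) R} (htrace : M.trace = 0) (hdet : M.det = 0) :
    M.charpoly = X ^ 2 := by
  nontriviality R
  simp [Matrix.charpoly_fin_two, htrace, hdet]

section

variable {a b μ₁ μ₂ : ℝ} {p : ℕ}

theorem isM1Equil_mk_zero_iff {u : ℝ} :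
    IsM1Equil a b μ₁ μ₂ p (u, 0) ↔ (p : ℝ) * (b * u ^ 2 + μ₂ * u) + μ₁ = 0 := by
  simp [IsM1Equil]

theorem isM1Equil_of_mem_parabola (hb : b ≠ 0) (h : (p : ℝ) * μ₂ ^ 2 - 4 * b * μ₁ = 0) :
    IsM1Equil a b μ₁ μ₂ p (-μ₂ / (2 * b), 0) := by
  rw [isM1Equil_mk_zero_iff]
  field_simp
  linear_combination -h

variable (a b μ₁ μ₂ p)

theorem m1Jacobian_eq (u v : ℝ) :
    m1Jacobian a b μ₁ μ₂ p u v =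
      !![μ₁ * Real.sin v, (a + μ₁ * u) * Real.cos v;
         (p : ℝ) * (2 * b * u + μ₂), -(μ₁ * Real.sin v)] := by
  have hquad : HasDerivAt (fun u' : ℝ => (p : ℝ) * (b * u' ^ 2 + μ₂ * u') + μ₁ * Real.cos v)
      ((p : ℝ) * (2 * b * u + μ₂)) u := by
    have hpow := (hasDerivAt_pow 2 u).const_mul b
    have hlin := (hasDerivAt_id' u).const_mul μ₂
    refine (((hpow.add hlin).const_mul (p : ℝ)).add_const (μ₁ * Real.cos v)).congr_deriv ?_
    push_cast
    ring
  simp [m1Jacobian, hquad.deriv]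

theorem trace_m1Jacobian (u v : ℝ) : (m1Jacobian a b μ₁ μ₂ p u v).trace = 0 := by
  rw [m1Jacobian_eq, Matrix.trace_fin_two_of, add_neg_cancel]

theorem det_m1Jacobian_zero_right (u : ℝ) :
    (m1Jacobian a b μ₁ μ₂ p u 0).det = -((a + μ₁ * u) * (p * (2 * b * u + μ₂))) := by
  simp [m1Jacobian_eq]

theorem det_m1Jacobian_vertex (hb : b ≠ 0) :
    (m1Jacobian a b μ₁ μ₂ p (-μ₂ / (2 * b)) 0).det = 0 := by
  have hderiv : 2 * b * (-μ₂ / (2 * b)) + μ₂ = 0 := by field_simp; ring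
  rw [det_m1Jacobian_zero_right, hderiv, mul_zero, mul_zero, neg_zero]

end

theorem stmt_9_general (a b μ₁ μ₂ : ℝ) (p : ℕ) (hb : b ≠ 0)
    (h : (p : ℝ) * μ₂ ^ 2 - 4 * b * μ₁ = 0) :
    IsM1Equil a b μ₁ μ₂ p (-μ₂ / (2 * b), 0) ∧
    (m1Jacobian a b μ₁ μ₂ p (-μ₂ / (2 * b)) 0).trace = 0 ∧
    (m1Jacobian a b μ₁ μ₂ p (-μ₂ / (2 * b)) 0).det = 0 ∧
    (m1Jacobian a b μ₁ μ₂ p (-μ₂ / (2 * b)) 0).charpoly = X ^ 2 := by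
  have htrace := trace_m1Jacobian a b μ₁ μ₂ p (-μ₂ / (2 * b)) 0
  have hdet := det_m1Jacobian_vertex a b μ₁ μ₂ p hb
  exact ⟨isM1Equil_of_mem_parabola hb h, htrace, hdet,
    charpoly_eq_X_sq_of_trace_eq_zero_of_det_eq_zero htrace hdet⟩

/-- for system (m1) with `a = 2`, `b = 1`, on the bifurcation
parabola `p·μ₂² − 4μ₁ = 0` the point `(−μ₂/2, 0)` is an equilibrium whose
Jacobian matrix has zero trace and zero determinant, hence both eigenvalues of
the linearization are zero (its characteristic polynomial is `λ²`). -/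
theorem stmt_9 (μ₁ μ₂ : ℝ) (p : ℕ) (hp : 0 < p)
    (h : (p : ℝ) * μ₂ ^ 2 - 4 * μ₁ = 0) :
    IsM1Equil 2 1 μ₁ μ₂ p (-μ₂ / 2, 0) ∧
    (m1Jacobian 2 1 μ₁ μ₂ p (-μ₂ / 2) 0).trace = 0 ∧
    (m1Jacobian 2 1 μ₁ μ₂ p (-μ₂ / 2) 0).det = 0 ∧
    (m1Jacobian 2 1 μ₁ μ₂ p (-μ₂ / 2) 0).charpoly = X ^ 2 := by
  simpa only [mul_one] using stmt_9_general 2 1 μ₁ μ₂ p one_ne_zero (by linear_combination h)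
end

section
/- The map (mm2), T: (u,v) ↦ (U, V) with U = (u + α·a·sin v)/(1 − α·μ₁·sin v) and V = v + α·(p·b·U² + μ₂·p·U + μ₁·cos v), is area preserving on its domain of definition: at every point (u,v) with 1 − α·μ₁·sin v ≠ 0, the determinant of the Jacobian matrix of T equals 1. -/
open Real

/-!
The map is a composition of three maps with Jacobian determinant `1`. Put
`g v = v + α μ₁ cos v`, so that `g' v = 1 - α μ₁ sin v`. First shear `u` by `α a sin v`, then lift
`g` to the cotangent bundle, `(u, v) ↦ (u / g' v, g v)`, and finally shear `v` by
`α (p b u² + μ₂ p u)`.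
-/

theorem linearMap_det_prod_self {R : Type*} [CommRing R] (f : R × R →ₗ[R] R × R) :
    LinearMap.det f = (f (1, 0)).1 * (f (0, 1)).2 - (f (0, 1)).1 * (f (1, 0)).2 := by
  rw [← LinearMap.det_toMatrix (Module.Basis.finTwoProd R), Matrix.det_fin_two]
  simp [LinearMap.toMatrix_apply]

section UnitJacobian

variable {𝕜 : Type*} [NontriviallyNormedField 𝕜]

/-- `T` is differentiable at `x` with Jacobian determinant `1`: the infinitesimal form of
preservation of volume and orientation. Meant for finite-dimensional `E`: otherwise
`LinearMap.det` is `1` by convention. -/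
def HasUnitJacobianAt (𝕜 : Type*) [NontriviallyNormedField 𝕜] {E : Type*} [NormedAddCommGroup E]
    [NormedSpace 𝕜 E] (T : E → E) (x : E) : Prop :=
  ∃ D : E →L[𝕜] E, HasFDerivAt T D x ∧ LinearMap.det (D : E →ₗ[𝕜] E) = 1

theorem HasUnitJacobianAt.comp {E : Type*} [NormedAddCommGroup E] [NormedSpace 𝕜 E]
    {S T : E → E} {x : E} (hS : HasUnitJacobianAt 𝕜 S (T x))
    (hT : HasUnitJacobianAt 𝕜 T x) : HasUnitJacobianAt 𝕜 (S ∘ T) x := by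
  obtain ⟨D, hD, hdetD⟩ := hS
  obtain ⟨D', hD', hdetD'⟩ := hT
  refine ⟨D.comp D', hD.comp x hD', ?_⟩
  rw [ContinuousLinearMap.toLinearMap_comp, LinearMap.det_comp, hdetD, hdetD', mul_one]

theorem hasUnitJacobianAt_shear_fst {h : 𝕜 → 𝕜} {x : 𝕜 × 𝕜} (hh : DifferentiableAt 𝕜 h x.2) :
    HasUnitJacobianAt 𝕜 (fun q : 𝕜 × 𝕜 => (q.1 + h q.2, q.2)) x := by
  have hshift := hh.hasDerivAt.comp_hasFDerivAt x (hasFDerivAt_snd (𝕜 := 𝕜))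
  exact ⟨_, (hasFDerivAt_fst.add hshift).prodMk hasFDerivAt_snd,
    by simp [linearMap_det_prod_self]⟩

theorem hasUnitJacobianAt_shear_snd {f : 𝕜 → 𝕜} {x : 𝕜 × 𝕜} (hf : DifferentiableAt 𝕜 f x.1) :
    HasUnitJacobianAt 𝕜 (fun q : 𝕜 × 𝕜 => (q.1, q.2 + f q.1)) x := by
  have hshift := hf.hasDerivAt.comp_hasFDerivAt x (hasFDerivAt_fst (𝕜 := 𝕜))
  exact ⟨_, hasFDerivAt_fst.prodMk (hasFDerivAt_snd.add hshift),
    by simp [linearMap_det_prod_self]⟩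

theorem hasUnitJacobianAt_cotangentLift {g g' : 𝕜 → 𝕜} {x : 𝕜 × 𝕜}
    (hg : HasDerivAt g (g' x.2) x.2) (hg' : DifferentiableAt 𝕜 g' x.2) (hne : g' x.2 ≠ 0) :
    HasUnitJacobianAt 𝕜 (fun q : 𝕜 × 𝕜 => (q.1 / g' q.2, g q.2)) x := by
  have hinv := (hg'.hasDerivAt.fun_inv hne).comp_hasFDerivAt x (hasFDerivAt_snd (𝕜 := 𝕜))
  have hbase := hg.comp_hasFDerivAt x (hasFDerivAt_snd (𝕜 := 𝕜))
  simp only [div_eq_mul_inv]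
  exact ⟨_, (hasFDerivAt_fst.mul hinv).prodMk hbase, by simp [linearMap_det_prod_self, hne]⟩

theorem stmt_13_general {f g g' h : 𝕜 → 𝕜} {x : 𝕜 × 𝕜}
    (hf : DifferentiableAt 𝕜 f ((x.1 + h x.2) / g' x.2))
    (hg : HasDerivAt g (g' x.2) x.2) (hg' : DifferentiableAt 𝕜 g' x.2) (hne : g' x.2 ≠ 0)
    (hh : DifferentiableAt 𝕜 h x.2) :
    HasUnitJacobianAt 𝕜 (fun q : 𝕜 × 𝕜 =>
      ((q.1 + h q.2) / g' q.2, g q.2 + f ((q.1 + h q.2) / g' q.2))) x := by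
  have hshear := hasUnitJacobianAt_shear_fst hh
  have hlift := hasUnitJacobianAt_cotangentLift (x := (x.1 + h x.2, x.2)) hg hg' hne
  have hkick := hasUnitJacobianAt_shear_snd (x := ((x.1 + h x.2) / g' x.2, g x.2)) hf
  exact hkick.comp (hlift.comp hshear)

end UnitJacobian

theorem hasDerivAt_add_mul_cos (c v : ℝ) :
    HasDerivAt (fun w => w + c * Real.cos w) (1 - c * Real.sin v) v := by
  simpa [sub_eq_add_neg] using (hasDerivAt_id' v).fun_add ((Real.hasDerivAt_cos v).const_mul c)

/-- the map (mm2),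
`T(u,v) = (U, v + α(p·b·U² + μ₂·p·U + μ₁·cos v))` with
`U = (u + α·a·sin v)/(1 − α·μ₁·sin v)`, is area preserving on its domain of
definition: at every point where `1 − α·μ₁·sin v ≠ 0` it is differentiable and
the determinant of its Jacobian equals 1. -/
theorem stmt_13 (α a b μ₁ μ₂ : ℝ) (p : ℕ) (hp : 0 < p) :
    ∀ x : ℝ × ℝ, 1 - α * μ₁ * Real.sin x.2 ≠ 0 →
      ∃ D : ℝ × ℝ →L[ℝ] ℝ × ℝ,
        HasFDerivAt (fun q : ℝ × ℝ =>
          ((q.1 + α * a * Real.sin q.2) / (1 - α * μ₁ * Real.sin q.2),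
           q.2 + α * ((p : ℝ) * b *
              ((q.1 + α * a * Real.sin q.2) / (1 - α * μ₁ * Real.sin q.2)) ^ 2 +
            μ₂ * p * ((q.1 + α * a * Real.sin q.2) / (1 - α * μ₁ * Real.sin q.2)) +
            μ₁ * Real.cos q.2))) D x ∧
        LinearMap.det (D : ℝ × ℝ →ₗ[ℝ] ℝ × ℝ) = 1 := by
  intro x hx
  change HasUnitJacobianAt ℝ _ x
  convert stmt_13_general (f := fun U => α * (p * b * U ^ 2 + μ₂ * p * U))
    (g' := fun v => 1 - α * μ₁ * Real.sin v) (h := fun v => α * a * Real.sin v)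
    (by fun_prop) (hasDerivAt_add_mul_cos (α * μ₁) x.2) (by fun_prop) hx (by fun_prop) using 3
  ring
end
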